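/- Let m ≥ 2 and 0 ≤ a ≤ m−2 be integers, and let M, N be coprime integers with N > 0. Then lim_{t→0⁺} m·e^{(2πiM/N − t)(m−a−1)²/(4m)}·S_m^{(a)}(e^{2πiM/N − t}) = m·Σ_{n=0}^{mN} χ_{2m}^{(a)}(n)·(1 − n/(mN))·e^{2πiMn²/(4mN)}. -/

import Mathlib

open Finset

/-- The q-Pochhammer symbol `(x;q)_n = ∏_{j=0}^{n-1} (1 - x q^j)`. -/
noncomputable def qPoch (x q : ℂ) (n : ℕ) : ℂ := ∏ j ∈ Finset.range n, (1 - x * q ^ j)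

/-- The Gaussian binomial coefficient `[n choose k]_q`. -/
noncomputable def qBinom (q : ℂ) (n k : ℕ) : ℂ :=
  if k ≤ n then qPoch q q n / (qPoch q q (n - k) * qPoch q q k) else 0

/-- Extend a tuple `g : Fin k → ℕ` to `ℕ → ℕ` by zero. -/
def pad (k : ℕ) (g : Fin k → ℕ) : ℕ → ℕ := fun j => if h : j < k then g ⟨j, h⟩ else 0

/-- The general term of Hikami's multi-sum: here `n j` denotes `n_{j+1}` (0-based indexing). -/
noncomputable def Sterm (m a : ℕ) (q : ℂ) (n : ℕ → ℕ) : ℂ :=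
  (-1) ^ (n (m - 2)) *
    q ^ (n (m - 2) * (n (m - 2) + 1) / 2 + (∑ j ∈ Finset.range (m - 2), (n j) ^ 2) +
        ∑ j ∈ Finset.Ico a (m - 2), n j) *
    ∏ i ∈ Finset.range (m - 2), qBinom q (n (i + 1) + if i + 1 = a then 1 else 0) (n i)

/-- The multi-sum `S_m^{(a)}(q)`. -/
noncomputable def S (m a : ℕ) (q : ℂ) : ℂ := ∑' n : Fin (m - 1) → ℕ, Sterm m a q (pad (m - 1) n)

/-- The odd periodic function `χ_{2m}^{(a)}`. -/
def chiS (m a : ℕ) (n : ℤ) : ℤ :=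
  if n % (2 * m) = ((m : ℤ) - a - 1) % (2 * m) then 1
  else if n % (2 * m) = ((m : ℤ) + a + 1) % (2 * m) then -1
  else 0

/-
Iterating the Bailey transform, with parameters sent to infinity, turns the nested sums in `S` into
a sum over a Bailey chain, and one conjugate Bailey pair evaluates the last sum. The result is the
partial theta series `∑ χ(n) q ^ (n² / 4m)`. At `q = e ^ (2πiM/N - t)` this is an Abelian mean,
with weights `e ^ (-t n² / 4m)`, of the coefficients `χ(n) e ^ (2πiMn² / 4mN)`, which are odd and
periodic with period `2mN`. These sum to zero over a period, so two summations by parts leave the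
mean value of their partial sums plus an error bounded by the second differences of the weights,
which vanishes by dominated convergence. Oddness turns the mean value into `∑ χ(n) (1 - n/mN) …`.
-/

section QPochhammer

variable {q : ℂ}

lemma qPoch_zero (x q : ℂ) : qPoch x q 0 = 1 := Finset.prod_range_zero _

lemma qPoch_self_succ (q : ℂ) (n : ℕ) :
    qPoch q q (n + 1) = qPoch q q n * (1 - q ^ (n + 1)) := by
  rw [qPoch, Finset.prod_range_succ, ← pow_succ', qPoch]

lemma not_isOfFinOrder_of_norm_lt_one (hq : ‖q‖ < 1) : ¬ IsOfFinOrder q :=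
  fun h => hq.ne h.norm_eq_one

lemma one_sub_pow_succ_ne_zero (hq : ¬ IsOfFinOrder q) (n : ℕ) : 1 - q ^ (n + 1) ≠ 0 :=
  fun h => hq (isOfFinOrder_iff_pow_eq_one.2 ⟨n + 1, n.succ_pos, (sub_eq_zero.1 h).symm⟩)

lemma qPoch_self_ne_zero (hq : ¬ IsOfFinOrder q) (n : ℕ) : qPoch q q n ≠ 0 := by
  induction n with
  | zero => simp only [qPoch_zero, ne_eq, one_ne_zero, not_false_eq_true]
  | succ n ih => exact qPoch_self_succ q n ▸ mul_ne_zero ih (one_sub_pow_succ_ne_zero hq n)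

lemma inv_qPoch_self (hq : ¬ IsOfFinOrder q) (n : ℕ) :
    (qPoch q q n)⁻¹ = (1 - q ^ (n + 1)) * (qPoch q q (n + 1))⁻¹ := by
  rw [qPoch_self_succ, mul_inv, mul_left_comm,
    mul_inv_cancel₀ (one_sub_pow_succ_ne_zero hq n), mul_one]

/-- The factor `1 / (q;q)_{n-k}` of `q`-series, with the usual convention that it vanishes for
`k > n`; spelled with two natural indices to avoid integer subscripts. -/
noncomputable def invQPochSub (q : ℂ) (n k : ℕ) : ℂ := if k ≤ n then (qPoch q q (n - k))⁻¹ else 0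

lemma invQPochSub_add_left (q : ℂ) (k i : ℕ) : invQPochSub q (k + i) k = (qPoch q q i)⁻¹ := by
  rw [invQPochSub, if_pos (Nat.le_add_right k i), Nat.add_sub_cancel_left]

lemma invQPochSub_of_lt (q : ℂ) {n k : ℕ} (h : n < k) : invQPochSub q n k = 0 :=
  if_neg h.not_ge

lemma invQPochSub_add_right (q : ℂ) (n k i : ℕ) :
    invQPochSub q (n + i) (k + i) = invQPochSub q n k := by
  simp only [invQPochSub, Nat.add_le_add_iff_right, Nat.add_sub_add_right]

lemma invQPochSub_eq_one_sub_mul (hq : ¬ IsOfFinOrder q) {n k : ℕ} (h : k ≤ n + 1) :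
    invQPochSub q n k = (1 - q ^ (n + 1 - k)) * invQPochSub q (n + 1) k := by
  rcases Nat.lt_or_ge n k with hnk | hkn
  · obtain rfl : k = n + 1 := by omega
    rw [invQPochSub_of_lt q hnk, Nat.sub_self, pow_zero, sub_self, zero_mul]
  · obtain ⟨i, rfl⟩ := Nat.exists_eq_add_of_le hkn
    rw [invQPochSub_add_left, add_assoc, invQPochSub_add_left, Nat.add_sub_cancel_left,
      inv_qPoch_self hq]

lemma qBinom_eq_mul_invQPochSub (q : ℂ) (n k : ℕ) :
    qBinom q n k = qPoch q q n * invQPochSub q n k * (qPoch q q k)⁻¹ := by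
  unfold qBinom invQPochSub
  split_ifs
  · rw [div_eq_mul_inv, mul_inv, mul_assoc]
  · rw [mul_zero, zero_mul]

lemma qBinom_of_lt (q : ℂ) {n k : ℕ} (h : n < k) : qBinom q n k = 0 :=
  if_neg h.not_ge

lemma qBinom_zero_right (hq : ¬ IsOfFinOrder q) (n : ℕ) : qBinom q n 0 = 1 := by
  rw [qBinom, if_pos n.zero_le, Nat.sub_zero, qPoch_zero, mul_one,
    div_self (qPoch_self_ne_zero hq n)]

lemma qBinom_succ_succ (hq : ¬ IsOfFinOrder q) {n k : ℕ} (hk : k ≤ n) :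
    qBinom q (n + 1) (k + 1) = qBinom q n (k + 1) + q ^ (n - k) * qBinom q n k := by
  simp only [qBinom_eq_mul_invQPochSub]
  rw [invQPochSub_eq_one_sub_mul hq (Nat.succ_le_succ hk), Nat.add_sub_add_right,
    invQPochSub_add_right, inv_qPoch_self hq k, qPoch_self_succ q n,
    show n + 1 = (n - k) + (k + 1) by omega, pow_add]
  ring

lemma sum_qBinom_mul_inv_qPoch (hq : ¬ IsOfFinOrder q) (L b : ℕ) :
    ∑ i ∈ Finset.range (L + 1), qBinom q L i * q ^ (i * (i + b)) * (qPoch q q (b + i))⁻¹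
      = (qPoch q q (L + b))⁻¹ := by
  induction L generalizing b with
  | zero => simp [qBinom_zero_right hq]
  | succ L ih =>
    have pascal : ∀ i ∈ Finset.range (L + 1),
        qBinom q (L + 1) (i + 1) * q ^ ((i + 1) * (i + 1 + b)) * (qPoch q q (b + (i + 1)))⁻¹
        = qBinom q L (i + 1) * q ^ ((i + 1) * (i + 1 + b)) * (qPoch q q (b + (i + 1)))⁻¹
          + q ^ (L + b + 1) *
            (qBinom q L i * q ^ (i * (i + (b + 1))) * (qPoch q q (b + 1 + i))⁻¹) := by
      intro i hi
      have hiL : i ≤ L := Finset.mem_range_succ_iff.1 hi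
      have hpow : q ^ (L - i) * q ^ ((i + 1) * (i + 1 + b))
          = q ^ (L + b + 1) * q ^ (i * (i + (b + 1))) := by
        obtain ⟨d, rfl⟩ := Nat.exists_eq_add_of_le hiL
        rw [← pow_add, ← pow_add, Nat.add_sub_cancel_left]
        ring
      rw [qBinom_succ_succ hq hiL, show b + (i + 1) = b + 1 + i by ring]
      linear_combination (qBinom q L i * (qPoch q q (b + 1 + i))⁻¹) * hpow
    have hb : ∑ i ∈ Finset.range (L + 1), qBinom q L (i + 1) * q ^ ((i + 1) * (i + 1 + b)) *
        (qPoch q q (b + (i + 1)))⁻¹ + (qPoch q q b)⁻¹ = (qPoch q q (L + b))⁻¹ := by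
      have hext := Finset.sum_range_succ
        (fun i => qBinom q L i * q ^ (i * (i + b)) * (qPoch q q (b + i))⁻¹) (L + 1)
      rw [ih b, qBinom_of_lt q L.lt_succ_self, zero_mul, zero_mul, add_zero,
        Finset.sum_range_succ'] at hext
      simpa only [qBinom_zero_right hq, zero_mul, pow_zero, one_mul, add_zero] using hext
    rw [Finset.sum_range_succ', Finset.sum_congr rfl pascal, Finset.sum_add_distrib,
      ← Finset.mul_sum, ih (b + 1), qBinom_zero_right hq, ← add_assoc L b 1,
      show L + 1 + b = L + b + 1 by ring]
    rw [inv_qPoch_self hq (L + b)] at hb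
    linear_combination hb

end QPochhammer

section BaileyTransform

variable {q : ℂ}

/-- The sequence `(q;q)_n β_n`, where `(α, β)` is the Bailey pair relative to `q ^ e` determined
by `α`. The constant `(q;q)_e` is absorbed into `α`, so that the factor `1 / (q^{e+1};q)_{n+r}` of
the usual definition becomes `1 / (q;q)_{n+r+e}`. -/
noncomputable def baileyTransform (q : ℂ) (e : ℕ) (α : ℕ → ℂ) (n : ℕ) : ℂ :=
  qPoch q q n * ∑ r ∈ Finset.range (n + 1),
    α r * (invQPochSub q n r * (qPoch q q (n + r + e))⁻¹)

lemma baileyTransform_eq_sum_range (q : ℂ) (e : ℕ) (α : ℕ → ℂ) {n K : ℕ} (hK : n < K) :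
    baileyTransform q e α n = qPoch q q n * ∑ r ∈ Finset.range K,
      α r * (invQPochSub q n r * (qPoch q q (n + r + e))⁻¹) := by
  rw [baileyTransform, Finset.sum_subset (Finset.range_subset_range.2 hK)]
  intro r _ hr
  rw [invQPochSub_of_lt q (by rwa [Finset.mem_range_succ_iff, not_le] at hr), zero_mul, mul_zero]

lemma sum_invQPochSub_mul_inv_qPoch (hq : ¬ IsOfFinOrder q) (e : ℕ) {n r : ℕ} (hr : r ≤ n) :
    ∑ k ∈ Finset.range (n + 1),
      invQPochSub q n k * q ^ (k ^ 2 + e * k) * (invQPochSub q k r * (qPoch q q (k + r + e))⁻¹)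
    = q ^ (r ^ 2 + e * r) * (invQPochSub q n r * (qPoch q q (n + r + e))⁻¹) := by
  obtain ⟨L, rfl⟩ := Nat.exists_eq_add_of_le hr
  rw [add_assoc, Finset.sum_range_add, Finset.sum_eq_zero, zero_add, invQPochSub_add_left,
    show r + L + r + e = L + (2 * r + e) by ring, ← sum_qBinom_mul_inv_qPoch hq, Finset.mul_sum,
    Finset.mul_sum]
  · refine Finset.sum_congr rfl fun i hi => ?_
    have hL := qPoch_self_ne_zero hq L
    obtain ⟨d, rfl⟩ := Nat.exists_eq_add_of_le (Finset.mem_range_succ_iff.1 hi)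
    rw [invQPochSub_add_left, qBinom_eq_mul_invQPochSub, invQPochSub_add_left, ← add_assoc,
      invQPochSub_add_left, show r + i + r + e = 2 * r + e + i by ring,
      show (r + i) ^ 2 + e * (r + i) = r ^ 2 + e * r + i * (i + (2 * r + e)) by ring,
      pow_add q (r ^ 2 + e * r)]
    field_simp
  · intro k hk
    rw [invQPochSub_of_lt q (Finset.mem_range.1 hk), zero_mul, mul_zero]

-- Bailey's lemma with both parameters sent to infinity.
lemma sum_qBinom_mul_baileyTransform (hq : ¬ IsOfFinOrder q) (e : ℕ) (α : ℕ → ℂ) {n K : ℕ}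
    (hK : n < K) :
    ∑ k ∈ Finset.range K, qBinom q n k * q ^ (k ^ 2 + e * k) * baileyTransform q e α k
      = baileyTransform q e (fun r => q ^ (r ^ 2 + e * r) * α r) n := by
  have hexpand : ∀ k ∈ Finset.range (n + 1),
      qBinom q n k * q ^ (k ^ 2 + e * k) * baileyTransform q e α k
      = ∑ r ∈ Finset.range (n + 1), qPoch q q n * (α r * (invQPochSub q n k *
        q ^ (k ^ 2 + e * k) * (invQPochSub q k r * (qPoch q q (k + r + e))⁻¹))) := by
    intro k hk
    have hk0 := qPoch_self_ne_zero hq k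
    rw [baileyTransform_eq_sum_range q e α (Finset.mem_range.1 hk), qBinom_eq_mul_invQPochSub,
      Finset.mul_sum, Finset.mul_sum]
    refine Finset.sum_congr rfl fun r _ => ?_
    field_simp
  rw [← Finset.sum_subset (Finset.range_subset_range.2 hK), Finset.sum_congr rfl hexpand,
    Finset.sum_comm, baileyTransform, Finset.mul_sum]
  · refine Finset.sum_congr rfl fun r hr => ?_
    rw [← Finset.mul_sum, ← Finset.mul_sum,
      sum_invQPochSub_mul_inv_qPoch hq e (Finset.mem_range_succ_iff.1 hr)]
    ring
  · intro k _ hk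
    rw [qBinom_of_lt q (by rwa [Finset.mem_range_succ_iff, not_le] at hk), zero_mul, zero_mul]

/-- The sequence `r ↦ γ_r + γ_{-r}` (with `γ_0` counted once) of a bilateral sequence satisfying
`γ_{-r} = q^r γ_r`. The `α`'s of the Bailey pairs relative to `1` in the chain have this shape. -/
noncomputable def foldBilateral (q : ℂ) (γ : ℕ → ℂ) (r : ℕ) : ℂ :=
  if r = 0 then γ 0 else (1 + q ^ r) * γ r

lemma mul_foldBilateral (q : ℂ) (f γ : ℕ → ℂ) :
    (fun r => f r * foldBilateral q γ r) = foldBilateral q (fun r => f r * γ r) := by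
  funext r
  unfold foldBilateral
  split_ifs with h
  · rw [h]
  · ring

-- Passage from base `1` to base `q`. With `D = (q)_{n+1-r} (q)_{n+1+r}`, the identity
-- `(1 - q^{n+1}) (1 + q^r) = q^r (1 - q^{n+1-r}) + (1 - q^{n+1+r})` divided by `D` splits each
-- summand into two summands of base `q`, of indices `r` and `r - 1`.
lemma baileyTransform_foldBilateral_succ (hq : ¬ IsOfFinOrder q) (γ : ℕ → ℂ) (n : ℕ) :
    baileyTransform q 0 (foldBilateral q γ) (n + 1)
      = baileyTransform q 1 (fun r => q ^ r * γ r + γ (r + 1)) n := by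
  set κ : ℕ → ℂ := fun r => invQPochSub q n r * (qPoch q q (n + r + 1))⁻¹ with hκ
  have hsplit : ∀ r ∈ Finset.range (n + 1), (1 - q ^ (n + 1)) * (foldBilateral q γ (r + 1) *
      (invQPochSub q (n + 1) (r + 1) * (qPoch q q (n + 1 + (r + 1) + 0))⁻¹))
      = q ^ (r + 1) * γ (r + 1) * κ (r + 1) + γ (r + 1) * κ r := by
    intro r hr
    obtain ⟨d, rfl⟩ := Nat.exists_eq_add_of_le (Finset.mem_range_succ_iff.1 hr)
    simp only [hκ]
    rw [invQPochSub_eq_one_sub_mul hq (show r + 1 ≤ r + d + 1 by omega), invQPochSub_add_right,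
      Nat.add_sub_add_right, Nat.add_sub_cancel_left, inv_qPoch_self hq (r + d + r + 1),
      foldBilateral, if_neg r.succ_ne_zero]
    ring_nf
  have hzero : (1 - q ^ (n + 1)) * (foldBilateral q γ 0 *
      (invQPochSub q (n + 1) 0 * (qPoch q q (n + 1 + 0 + 0))⁻¹)) = q ^ 0 * γ 0 * κ 0 := by
    simp only [hκ]
    rw [invQPochSub_eq_one_sub_mul hq n.succ.zero_le, foldBilateral, if_pos rfl]
    simp only [Nat.sub_zero, add_zero, pow_zero]
    ring
  have hlast : κ (n + 1) = 0 := by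
    simp only [hκ, invQPochSub_of_lt q n.lt_succ_self, zero_mul]
  have hshift : ∑ r ∈ Finset.range (n + 1), q ^ (r + 1) * γ (r + 1) * κ (r + 1)
      + q ^ 0 * γ 0 * κ 0 = ∑ r ∈ Finset.range (n + 1), q ^ r * γ r * κ r := by
    rw [← Finset.sum_range_succ' (fun r => q ^ r * γ r * κ r), Finset.sum_range_succ, hlast,
      mul_zero, add_zero]
  rw [baileyTransform, qPoch_self_succ, mul_assoc, Finset.mul_sum, Finset.sum_range_succ',
    Finset.sum_congr rfl hsplit, hzero, Finset.sum_add_distrib, add_right_comm, hshift,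
    ← Finset.sum_add_distrib, baileyTransform]
  exact congrArg _ (Finset.sum_congr rfl fun r _ => (add_mul _ _ _).symm)

lemma choose_two_succ (n : ℕ) : (n + 1).choose 2 = n.choose 2 + n := by
  rw [Nat.choose_succ_succ' n 1, Nat.choose_one_right, add_comm]

end BaileyTransform

section InnerSum

variable {q : ℂ}

/-- The sequence `(-1)^r q^{r(r-1)/2 + b r^2}`; its folding determines the `b`-th Bailey pair of
the chain over the unit pair relative to `1`. -/
noncomputable def chainSeq (q : ℂ) (b r : ℕ) : ℂ := (-1) ^ r * q ^ (r.choose 2 + b * r ^ 2)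

lemma chainSeq_succ (q : ℂ) (b r : ℕ) : chainSeq q (b + 1) r = q ^ r ^ 2 * chainSeq q b r := by
  rw [chainSeq, chainSeq, add_one_mul, ← add_assoc, pow_add]
  ring

lemma sum_qBinom_mul_baileyTransform_chainSeq (hq : ¬ IsOfFinOrder q) (b : ℕ) {n K : ℕ}
    (hK : n < K) :
    ∑ k ∈ Finset.range K,
      qBinom q n k * q ^ k ^ 2 * baileyTransform q 0 (foldBilateral q (chainSeq q b)) k
      = baileyTransform q 0 (foldBilateral q (chainSeq q (b + 1))) n := by
  have h := sum_qBinom_mul_baileyTransform hq 0 (foldBilateral q (chainSeq q b)) hK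
  simp only [zero_mul, add_zero, mul_foldBilateral q (fun r => q ^ r ^ 2), ← chainSeq_succ] at h
  exact h

lemma baileyTransform_chainSeq_zero (hq : ¬ IsOfFinOrder q) (n : ℕ) :
    baileyTransform q 0 (foldBilateral q (chainSeq q 0)) n = if n = 0 then 1 else 0 := by
  have hcancel (r : ℕ) : q ^ r * chainSeq q 0 r + chainSeq q 0 (r + 1) = 0 := by
    simp only [chainSeq, choose_two_succ]
    ring
  rcases n with _ | n
  · simp [baileyTransform, foldBilateral, chainSeq, invQPochSub, qPoch_zero]
  · rw [baileyTransform_foldBilateral_succ hq, if_neg n.succ_ne_zero, baileyTransform]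
    simp only [hcancel, zero_mul, Finset.sum_const_zero, mul_zero]

lemma baileyTransform_chainSeq_one (hq : ¬ IsOfFinOrder q) (n : ℕ) :
    baileyTransform q 0 (foldBilateral q (chainSeq q 1)) n = 1 := by
  rw [← zero_add 1, ← sum_qBinom_mul_baileyTransform_chainSeq hq 0 n.lt_succ_self,
    Finset.sum_range_succ']
  simp [baileyTransform_chainSeq_zero hq, qBinom_zero_right hq]

/-- The nested finite sum over `n_1, …, n_j` in `S_m^{(a)}(q)` once `n_{j+1} = n` is fixed. The
range of `k` contains the support of the binomial coefficient in either case of the shift. -/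
noncomputable def innerSum (q : ℂ) (a : ℕ) : ℕ → ℕ → ℂ
  | 0, _ => 1
  | j + 1, n => ∑ k ∈ Finset.range (n + 2), qBinom q (n + if j + 1 = a then 1 else 0) k *
      q ^ (k ^ 2 + if a ≤ j then k else 0) * innerSum q a j k

lemma innerSum_of_le (hq : ¬ IsOfFinOrder q) {a j : ℕ} (hj : j ≤ a) (n : ℕ) :
    innerSum q a j n
      = baileyTransform q 0 (foldBilateral q (chainSeq q (j + 1)))
          (n + if j = a then 1 else 0) := by
  induction j generalizing n with
  | zero => rw [innerSum, baileyTransform_chainSeq_one hq]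
  | succ j ih =>
    have hK : n + (if j + 1 = a then 1 else 0) < n + 2 := by split_ifs <;> omega
    rw [innerSum, ← sum_qBinom_mul_baileyTransform_chainSeq hq _ hK]
    refine Finset.sum_congr rfl fun k _ => ?_
    rw [ih (by omega), if_neg (show ¬ a ≤ j by omega), if_neg (show ¬ j = a by omega), add_zero,
      add_zero]

lemma pow_mul_chainSeq_add (q : ℂ) (b r : ℕ) :
    q ^ r * chainSeq q b r + chainSeq q b (r + 1)
      = (-1) ^ r * q ^ ((r + 1).choose 2 + b * r ^ 2) * (1 - q ^ (b * (2 * r + 1))) := by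
  simp only [chainSeq, choose_two_succ]
  ring

lemma innerSum_add (hq : ¬ IsOfFinOrder q) (a d n : ℕ) :
    innerSum q a (a + d) n = baileyTransform q 1
      (fun r => (-1) ^ r * q ^ ((r + 1).choose 2 + (a + 1) * r ^ 2 + d * (r ^ 2 + r)) *
        (1 - q ^ ((a + 1) * (2 * r + 1)))) n := by
  induction d generalizing n with
  | zero =>
    rw [add_zero, innerSum_of_le hq le_rfl, if_pos rfl, baileyTransform_foldBilateral_succ hq]
    simp only [pow_mul_chainSeq_add, zero_mul, add_zero]
  | succ d ih =>
    rw [← add_assoc, innerSum, if_neg (by omega), add_zero]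
    simp only [if_pos (Nat.le_add_right a d), ih]
    have hbailey := sum_qBinom_mul_baileyTransform hq 1
      (fun r => (-1) ^ r * q ^ ((r + 1).choose 2 + (a + 1) * r ^ 2 + d * (r ^ 2 + r)) *
        (1 - q ^ ((a + 1) * (2 * r + 1)))) (Nat.lt_add_of_pos_right (n := n) two_pos)
    simp only [one_mul] at hbailey
    rw [hbailey]
    refine congrArg (baileyTransform q 1 · n) (funext fun r => ?_)
    rw [add_one_mul d, ← add_assoc, pow_add _ _ (r ^ 2 + r)]
    ring

end InnerSum

section Bounds

variable {q : ℂ}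

lemma exists_tendsto_qPoch_self (hq : ‖q‖ < 1) :
    ∃ L ≠ 0, Filter.Tendsto (qPoch q q) Filter.atTop (nhds L) := by
  have hs : Summable fun n : ℕ => ‖-q ^ (n + 1)‖ := by
    simp only [norm_neg, norm_pow]
    exact (summable_nat_add_iff 1).2 (summable_geometric_of_lt_one (norm_nonneg q) hq)
  have hne (n : ℕ) : 1 + -q ^ (n + 1) ≠ 0 := by
    rw [← sub_eq_add_neg]
    exact one_sub_pow_succ_ne_zero (not_isOfFinOrder_of_norm_lt_one hq) n
  refine ⟨_, tprod_one_add_ne_zero_of_summable hne hs, ?_⟩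
  refine (multipliable_one_add_of_summable hs).hasProd.tendsto_prod_nat.congr fun n => ?_
  simp only [qPoch, ← pow_succ', ← sub_eq_add_neg]

lemma exists_norm_qPoch_self_le (hq : ‖q‖ < 1) : ∃ C : ℝ, ∀ n, ‖qPoch q q n‖ ≤ C := by
  obtain ⟨L, -, hL⟩ := exists_tendsto_qPoch_self hq
  obtain ⟨C, hC⟩ := (Metric.isBounded_range_of_tendsto _ hL).exists_norm_le
  exact ⟨C, fun n => hC _ ⟨n, rfl⟩⟩

lemma exists_norm_inv_qPoch_self_le (hq : ‖q‖ < 1) : ∃ C : ℝ, ∀ n, ‖(qPoch q q n)⁻¹‖ ≤ C := by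
  obtain ⟨L, hL0, hL⟩ := exists_tendsto_qPoch_self hq
  obtain ⟨C, hC⟩ := (Metric.isBounded_range_of_tendsto _ (hL.inv₀ hL0)).exists_norm_le
  exact ⟨C, fun n => hC _ ⟨n, rfl⟩⟩

lemma exists_norm_invQPochSub_le (hq : ‖q‖ < 1) : ∃ C : ℝ, ∀ n k, ‖invQPochSub q n k‖ ≤ C := by
  obtain ⟨C, hC⟩ := exists_norm_inv_qPoch_self_le hq
  refine ⟨C, fun n k => ?_⟩
  unfold invQPochSub
  split_ifs
  · exact hC _
  · exact norm_zero.trans_le ((norm_nonneg _).trans (hC 0))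

lemma exists_norm_qBinom_le (hq : ‖q‖ < 1) : ∃ C : ℝ, ∀ n k, ‖qBinom q n k‖ ≤ C := by
  obtain ⟨A, hA⟩ := exists_norm_qPoch_self_le hq
  obtain ⟨B, hB⟩ := exists_norm_invQPochSub_le hq
  obtain ⟨C, hC⟩ := exists_norm_inv_qPoch_self_le hq
  have hA0 : 0 ≤ A := (norm_nonneg _).trans (hA 0)
  have hB0 : 0 ≤ B := (norm_nonneg _).trans (hB 0 0)
  refine ⟨A * B * C, fun n k => ?_⟩
  rw [qBinom_eq_mul_invQPochSub]
  exact norm_mul₃_le.trans (by gcongr <;> apply_assumption)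

lemma norm_pow_le_pow_of_le (hq : ‖q‖ ≤ 1) {n e : ℕ} (h : n ≤ e) : ‖q ^ e‖ ≤ ‖q‖ ^ n := by
  rw [norm_pow]
  exact pow_le_pow_of_le_one (norm_nonneg q) hq h

lemma le_choose_two_succ (n : ℕ) : n ≤ (n + 1).choose 2 :=
  (choose_two_succ n).symm ▸ Nat.le_add_left _ _

end Bounds

section ConjugateBaileyPair

variable {q : ℂ}

lemma hasSum_inv_qPoch_add_succ (hq : ‖q‖ < 1) (s : ℕ) :
    HasSum (fun i => (-1) ^ i * q ^ ((i + 1).choose 2 + s * i) * (qPoch q q (s + 1 + i))⁻¹)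
      (qPoch q q s)⁻¹ := by
  obtain ⟨C, hC⟩ := exists_norm_inv_qPoch_self_le hq
  set g : ℕ → ℂ := fun i => (-1) ^ i * q ^ ((i + 1).choose 2 + s * i) * (qPoch q q (s + i))⁻¹
    with hg
  have hs : Summable g := by
    refine Summable.of_norm_bounded
      ((summable_geometric_of_lt_one (norm_nonneg q) hq).mul_right C) fun i => ?_
    simp only [hg, norm_mul, norm_pow (-1 : ℂ), norm_neg, norm_one, one_pow, one_mul]
    gcongr
    · exact norm_pow_le_pow_of_le hq.le (le_add_right (le_choose_two_succ i))
    · exact hC _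
  have htelescope := hs.hasSum.sub ((hasSum_nat_add_iff' 1).2 hs.hasSum)
  convert! htelescope using 1
  · funext i
    simp only [hg]
    rw [inv_qPoch_self (not_isOfFinOrder_of_norm_lt_one hq) (s + i), choose_two_succ (i + 1),
      show s + (i + 1) = s + i + 1 by ring, show s + 1 + i = s + i + 1 by ring]
    ring
  · simp [hg]

lemma hasSum_qPoch_add_mul_inv (hq : ‖q‖ < 1) (r s : ℕ) :
    HasSum (fun i => (-1) ^ i * q ^ ((i + 1).choose 2 + s * i) * qPoch q q (r + i) *
        (qPoch q q i)⁻¹ * (qPoch q q (r + s + 1 + i))⁻¹)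
      (qPoch q q r * (qPoch q q s)⁻¹) := by
  have hq' := not_isOfFinOrder_of_norm_lt_one hq
  induction r generalizing s with
  | zero =>
    convert! hasSum_inv_qPoch_add_succ hq s using 1
    · funext i
      rw [zero_add, zero_add, mul_inv_cancel_right₀ (qPoch_self_ne_zero hq' i)]
    · rw [qPoch_zero, one_mul]
  | succ r ih =>
    convert! (ih s).add ((ih (s + 1)).mul_left (q ^ (r + s + 2) - q ^ (r + 1))) using 1
    · funext i
      rw [show r + 1 + i = r + i + 1 by ring, qPoch_self_succ, inv_qPoch_self hq' (r + s + 1 + i),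
        show r + 1 + s + 1 + i = r + s + 1 + i + 1 by ring,
        show r + (s + 1) + 1 + i = r + s + 1 + i + 1 by ring]
      ring
    · rw [inv_qPoch_self hq' s, qPoch_self_succ]
      ring

lemma choose_two_add_succ (r i : ℕ) :
    (r + i + 1).choose 2 = (r + 1).choose 2 + r * i + (i + 1).choose 2 := by
  induction i with
  | zero => simp
  | succ i ih => rw [← add_assoc, choose_two_succ (r + i + 1), ih, choose_two_succ (i + 1)]; ring

lemma hasSum_mul_invQPochSub (hq : ‖q‖ < 1) (r : ℕ) :
    HasSum (fun n => (-1) ^ n * q ^ (n + 1).choose 2 *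
        (qPoch q q n * (invQPochSub q n r * (qPoch q q (n + r + 1))⁻¹)))
      ((-1) ^ r * q ^ (r + 1).choose 2) := by
  have h := (hasSum_qPoch_add_mul_inv hq r r).mul_left ((-1) ^ r * q ^ (r + 1).choose 2)
  rw [mul_inv_cancel₀ (qPoch_self_ne_zero (not_isOfFinOrder_of_norm_lt_one hq) r), mul_one] at h
  rw [← (add_right_injective r).hasSum_iff]
  · convert! h using 1
    funext i
    rw [Function.comp_apply, invQPochSub_add_left, choose_two_add_succ,
      show r + i + r + 1 = r + r + 1 + i by ring]
    ring
  · intro n hn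
    have hnr : n < r := by
      by_contra! h
      exact hn ⟨n - r, Nat.add_sub_of_le h⟩
    rw [invQPochSub_of_lt q hnr, zero_mul, mul_zero, mul_zero]

lemma hasSum_baileyTransform_one (hq : ‖q‖ < 1) {α : ℕ → ℂ} (hα : Summable α) :
    HasSum (fun n => (-1) ^ n * q ^ (n + 1).choose 2 * baileyTransform q 1 α n)
      (∑' r, (-1) ^ r * q ^ (r + 1).choose 2 * α r) := by
  obtain ⟨A, hA⟩ := exists_norm_qPoch_self_le hq
  obtain ⟨B, hB⟩ := exists_norm_invQPochSub_le hq
  obtain ⟨C, hC⟩ := exists_norm_inv_qPoch_self_le hq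
  have hA0 : 0 ≤ A := (norm_nonneg _).trans (hA 0)
  have hB0 : 0 ≤ B := (norm_nonneg _).trans (hB 0 0)
  set F : ℕ × ℕ → ℂ := fun x => (-1) ^ x.2 * q ^ (x.2 + 1).choose 2 *
    (qPoch q q x.2 * (invQPochSub q x.2 x.1 * (qPoch q q (x.2 + x.1 + 1))⁻¹)) * α x.1 with hF
  have hsum : Summable F := by
    refine Summable.of_norm_bounded ((hα.norm.mul_of_nonneg
      (summable_geometric_of_lt_one (norm_nonneg q) hq) (fun _ => norm_nonneg _)
      fun _ => pow_nonneg (norm_nonneg q) _).mul_right (A * (B * C))) fun x => ?_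
    simp only [hF, norm_mul, norm_pow (-1 : ℂ), norm_neg, norm_one, one_pow, one_mul]
    calc _ ≤ ‖q‖ ^ x.2 * (A * (B * C)) * ‖α x.1‖ := by
          gcongr
          exacts [norm_pow_le_pow_of_le hq.le (le_choose_two_succ _), hA _, hB _ _, hC _]
      _ = _ := by ring
  have hcol (r : ℕ) : HasSum (fun n => F (r, n)) ((-1) ^ r * q ^ (r + 1).choose 2 * α r) :=
    (hasSum_mul_invQPochSub hq r).mul_right (α r)
  have hrow (n : ℕ) : HasSum (fun r => F (r, n))
      ((-1) ^ n * q ^ (n + 1).choose 2 * baileyTransform q 1 α n) := by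
    have hfinite : (-1) ^ n * q ^ (n + 1).choose 2 * baileyTransform q 1 α n
        = ∑ r ∈ Finset.range (n + 1), F (r, n) := by
      rw [baileyTransform, ← mul_assoc, Finset.mul_sum]
      exact Finset.sum_congr rfl fun r _ => by ring
    rw [hfinite]
    refine hasSum_sum_of_ne_finset_zero fun r hr => ?_
    rw [Finset.mem_range_succ_iff, not_le] at hr
    simp only [hF, invQPochSub_of_lt q hr, zero_mul, mul_zero]
  rw [(hsum.hasSum.prod_fiberwise hcol).tsum_eq]
  exact ((Equiv.prodComm ℕ ℕ).hasSum_iff.2 hsum.hasSum).prod_fiberwise hrow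

end ConjugateBaileyPair

section MultiSum

variable {q : ℂ}

lemma pad_snoc_last (k : ℕ) (g : Fin k → ℕ) (n : ℕ) :
    pad (k + 1) (Fin.snoc (α := fun _ => ℕ) g n) k = n := by
  rw [pad, dif_pos k.lt_succ_self]
  exact Fin.snoc_last (α := fun _ => ℕ) n g

lemma pad_snoc_of_lt {k i : ℕ} (hi : i < k) (g : Fin k → ℕ) (n : ℕ) :
    pad (k + 1) (Fin.snoc (α := fun _ => ℕ) g n) i = pad k g i := by
  rw [pad, pad, dif_pos hi, dif_pos (hi.trans k.lt_succ_self)]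
  exact Fin.snoc_castSucc (α := fun _ => ℕ) n g ⟨i, hi⟩

lemma prod_range_pad {R : Type*} [CommMonoid R] (f : ℕ → R) {k : ℕ} (g : Fin k → ℕ) :
    ∏ i ∈ Finset.range k, f (pad k g i) = ∏ i, f (g i) := by
  simp only [Finset.prod_range, pad, Fin.is_lt, dite_true]

lemma hasSum_fiberwise_snoc {α β : Type*} [AddCommMonoid α] [TopologicalSpace α] [ContinuousAdd α]
    [RegularSpace α] {j : ℕ} {f : (Fin (j + 1) → β) → α} {g : β → α} {s : α} (hf : HasSum f s)
    (hg : ∀ k, HasSum (fun x : Fin j → β => f (Fin.snoc (α := fun _ => β) x k)) (g k)) :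
    HasSum g s :=
  ((Fin.snocEquiv fun _ => β).hasSum_iff.2 hf).prod_fiberwise hg

lemma summable_prod_apply {β : Type*} {f : β → ℝ} (hf : Summable f) (hf0 : ∀ b, 0 ≤ f b) (k : ℕ) :
    Summable fun g : Fin k → β => ∏ i, f (g i) := by
  induction k with
  | zero => exact Summable.of_finite
  | succ k ih =>
    rw [← (Fin.snocEquiv fun _ : Fin (k + 1) => β).summable_iff]
    refine (hf.mul_of_nonneg ih hf0 fun g => Finset.prod_nonneg fun i _ => hf0 (g i)).congr
      fun x => ?_
    simp [Fin.snocEquiv, Fin.prod_univ_castSucc, mul_comm]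

/-- The part of the general term of the multi-sum that remains after the alternating Gaussian
factor of the outermost variable `n_{j+1}`, here `h j`, is removed. -/
noncomputable def innerWeight (q : ℂ) (a j : ℕ) (h : ℕ → ℕ) : ℂ :=
  q ^ ((∑ i ∈ Finset.range j, (h i) ^ 2) + ∑ i ∈ Finset.Ico a j, h i) *
    ∏ i ∈ Finset.range j, qBinom q (h (i + 1) + if i + 1 = a then 1 else 0) (h i)

lemma innerWeight_congr (q : ℂ) (a : ℕ) {j : ℕ} {h h' : ℕ → ℕ} (hh : ∀ i ≤ j, h i = h' i) :
    innerWeight q a j h = innerWeight q a j h' := by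
  unfold innerWeight
  congr 1
  · congr 2
    · exact Finset.sum_congr rfl fun i hi => by rw [hh i (Finset.mem_range.1 hi).le]
    · exact Finset.sum_congr rfl fun i hi => by rw [hh i (Finset.mem_Ico.1 hi).2.le]
  · exact Finset.prod_congr rfl fun i hi => by
      rw [hh i (Finset.mem_range.1 hi).le, hh (i + 1) (Finset.mem_range.1 hi)]

lemma innerWeight_succ (q : ℂ) (a j : ℕ) (h : ℕ → ℕ) :
    innerWeight q a (j + 1) h = qBinom q (h (j + 1) + if j + 1 = a then 1 else 0) (h j) *
      q ^ ((h j) ^ 2 + if a ≤ j then h j else 0) * innerWeight q a j h := by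
  have hIco : ∑ i ∈ Finset.Ico a (j + 1), h i
      = ∑ i ∈ Finset.Ico a j, h i + if a ≤ j then h j else 0 := by
    split_ifs with haj
    · rw [Finset.sum_Ico_succ_top haj]
    · rw [Finset.Ico_eq_empty (by omega), Finset.Ico_eq_empty (by omega), Finset.sum_empty,
        add_zero]
  rw [innerWeight, innerWeight, Finset.sum_range_succ, Finset.prod_range_succ, hIco]
  ring

lemma exists_norm_innerWeight_le (hq : ‖q‖ < 1) (a j : ℕ) :
    ∃ C : ℝ, ∀ h : ℕ → ℕ, ‖innerWeight q a j h‖ ≤ C * ∏ i ∈ Finset.range j, ‖q‖ ^ h i := by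
  obtain ⟨C, hC⟩ := exists_norm_qBinom_le hq
  have hC0 : 0 ≤ C := (norm_nonneg _).trans (hC 0 0)
  refine ⟨C ^ j, fun h => ?_⟩
  induction j with
  | zero => simp [innerWeight]
  | succ j ih =>
    have hpow : ‖q ^ ((h j) ^ 2 + if a ≤ j then h j else 0)‖ ≤ ‖q‖ ^ h j :=
      norm_pow_le_pow_of_le hq.le (le_add_right (Nat.le_self_pow two_ne_zero _))
    rw [innerWeight_succ, norm_mul, norm_mul, Finset.prod_range_succ]
    calc _ ≤ C * ‖q‖ ^ h j * (C ^ j * ∏ i ∈ Finset.range j, ‖q‖ ^ h i) := by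
          gcongr
          exact hC _ _
      _ = _ := by ring

lemma innerWeight_succ_snoc (q : ℂ) (a j n k : ℕ) (g : Fin j → ℕ) :
    innerWeight q a (j + 1) (pad (j + 2) (Fin.snoc (α := fun _ => ℕ)
        (Fin.snoc (α := fun _ => ℕ) g k : Fin (j + 1) → ℕ) n))
      = qBinom q (n + if j + 1 = a then 1 else 0) k * q ^ (k ^ 2 + if a ≤ j then k else 0) *
        innerWeight q a j (pad (j + 1) (Fin.snoc (α := fun _ => ℕ) g k)) := by
  rw [innerWeight_succ, pad_snoc_last, pad_snoc_of_lt j.lt_succ_self, pad_snoc_last,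
    innerWeight_congr q a fun i hi => pad_snoc_of_lt (Nat.lt_succ_of_le hi) _ n]

lemma summable_innerWeight_pad_snoc (hq : ‖q‖ < 1) (a j n : ℕ) :
    Summable fun g : Fin j → ℕ =>
      innerWeight q a j (pad (j + 1) (Fin.snoc (α := fun _ => ℕ) g n)) := by
  obtain ⟨C, hC⟩ := exists_norm_innerWeight_le hq a j
  refine Summable.of_norm_bounded ((summable_prod_apply (summable_geometric_of_lt_one
    (norm_nonneg q) hq) (fun _ => pow_nonneg (norm_nonneg q) _) j).mul_left C) fun g => ?_
  rw [← prod_range_pad (fun n => ‖q‖ ^ n) g]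
  refine (hC _).trans_eq (congrArg (C * ·) (Finset.prod_congr rfl fun i hi => ?_))
  rw [pad_snoc_of_lt (Finset.mem_range.1 hi)]

lemma hasSum_innerWeight_pad_snoc (hq : ‖q‖ < 1) (a j n : ℕ) :
    HasSum (fun g : Fin j → ℕ =>
      innerWeight q a j (pad (j + 1) (Fin.snoc (α := fun _ => ℕ) g n))) (innerSum q a j n) := by
  induction j generalizing n with
  | zero =>
    convert! hasSum_unique (fun g : Fin 0 → ℕ =>
      innerWeight q a 0 (pad 1 (Fin.snoc (α := fun _ => ℕ) g n))) using 1
    simp [innerWeight, innerSum]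
  | succ j ih =>
    have hs := (summable_innerWeight_pad_snoc hq a (j + 1) n).hasSum
    have hfibre := hasSum_fiberwise_snoc hs fun k => by
      simpa only [innerWeight_succ_snoc] using (ih k).mul_left
        (qBinom q (n + if j + 1 = a then 1 else 0) k * q ^ (k ^ 2 + if a ≤ j then k else 0))
    have houter : HasSum (fun k => qBinom q (n + if j + 1 = a then 1 else 0) k *
        q ^ (k ^ 2 + if a ≤ j then k else 0) * innerSum q a j k) (innerSum q a (j + 1) n) := by
      refine hasSum_sum_of_ne_finset_zero fun k hk => ?_
      rw [Finset.mem_range] at hk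
      rw [qBinom_of_lt q (by split_ifs <;> omega), zero_mul, zero_mul]
    exact hfibre.unique houter ▸ hs

lemma Sterm_eq (m a : ℕ) (q : ℂ) (h : ℕ → ℕ) :
    Sterm (m + 2) a q h = (-1) ^ h m * q ^ (h m + 1).choose 2 * innerWeight q a m h := by
  rw [Sterm, innerWeight, Nat.add_sub_cancel, Nat.choose_two_right, Nat.add_sub_cancel,
    mul_comm (h m + 1), add_assoc, pow_add]
  ring

lemma summable_Sterm (hq : ‖q‖ < 1) (m a : ℕ) :
    Summable fun g : Fin (m + 1) → ℕ => Sterm (m + 2) a q (pad (m + 1) g) := by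
  obtain ⟨C, hC⟩ := exists_norm_innerWeight_le hq a m
  refine Summable.of_norm_bounded ((summable_prod_apply (summable_geometric_of_lt_one
    (norm_nonneg q) hq) (fun _ => pow_nonneg (norm_nonneg q) _) (m + 1)).mul_left C) fun g => ?_
  rw [Sterm_eq, ← prod_range_pad (fun n => ‖q‖ ^ n) g, Finset.prod_range_succ]
  simp only [norm_mul, norm_pow (-1 : ℂ), norm_neg, norm_one, one_pow, one_mul]
  calc _ ≤ ‖q‖ ^ pad (m + 1) g m * (C * ∏ i ∈ Finset.range m, ‖q‖ ^ pad (m + 1) g i) := by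
        gcongr
        exacts [norm_pow_le_pow_of_le hq.le (le_choose_two_succ _), hC _]
    _ = _ := by ring

lemma hasSum_innerSum (hq : ‖q‖ < 1) (m a : ℕ) :
    HasSum (fun k => (-1) ^ k * q ^ (k + 1).choose 2 * innerSum q a m k) (S (m + 2) a q) :=
  hasSum_fiberwise_snoc (summable_Sterm hq m a).hasSum fun k => by
    simpa only [Sterm_eq, pad_snoc_last] using
      (hasSum_innerWeight_pad_snoc hq a m k).mul_left ((-1) ^ k * q ^ (k + 1).choose 2)

lemma S_eq_tsum (hq : ‖q‖ < 1) (a d : ℕ) :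
    S (a + d + 2) a q = ∑' r : ℕ, q ^ ((a + d + 2) * r ^ 2 + (d + 1) * r) *
      (1 - q ^ ((a + 1) * (2 * r + 1))) := by
  set α : ℕ → ℂ := fun r => (-1) ^ r *
    q ^ ((r + 1).choose 2 + (a + 1) * r ^ 2 + d * (r ^ 2 + r)) *
      (1 - q ^ ((a + 1) * (2 * r + 1))) with hα
  have hsum : Summable α := by
    refine Summable.of_norm_bounded
      ((summable_geometric_of_lt_one (norm_nonneg q) hq).mul_right 2) fun r => ?_
    simp only [hα, norm_mul, norm_pow (-1 : ℂ), norm_neg, norm_one, one_pow, one_mul]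
    gcongr
    · exact norm_pow_le_pow_of_le hq.le (by have := le_choose_two_succ r; omega)
    · calc _ ≤ ‖(1 : ℂ)‖ + ‖q ^ ((a + 1) * (2 * r + 1))‖ := norm_sub_le _ _
        _ ≤ 1 + ‖q‖ ^ 0 :=
          add_le_add norm_one.le (norm_pow_le_pow_of_le hq.le (Nat.zero_le _))
        _ = 2 := by norm_num
  have hchoose (r : ℕ) : 2 * (r + 1).choose 2 = r ^ 2 + r := by
    rw [Nat.choose_two_right, Nat.add_sub_cancel, mul_comm (r + 1),
      Nat.mul_div_cancel' (Nat.even_mul_succ_self r).two_dvd]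
    ring
  have hS := hasSum_innerSum hq (a + d) a
  simp only [innerSum_add (not_isOfFinOrder_of_norm_lt_one hq)] at hS
  rw [hS.unique (hasSum_baileyTransform_one hq hsum)]
  refine tsum_congr fun r => ?_
  have hsign (x : ℂ) : (-1) ^ r * ((-1) ^ r * x) = x := by
    rw [← mul_assoc, ← mul_pow, neg_one_mul, neg_neg, one_pow, one_mul]
  rw [show (a + d + 2) * r ^ 2 + (d + 1) * r = (r + 1).choose 2 +
    ((r + 1).choose 2 + (a + 1) * r ^ 2 + d * (r ^ 2 + r)) by linear_combination - hchoose r,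
    pow_add]
  refine Eq.trans ?_ (hsign _)
  ring

end MultiSum

section AbelianLimit

variable {E : Type*} [NormedAddCommGroup E]

lemma exists_norm_le_of_periodic {u : ℕ → E} {T : ℕ} (hT : 0 < T) (hu : Function.Periodic u T) :
    ∃ K : ℝ, ∀ n, ‖u n‖ ≤ K := by
  refine ⟨∑ i ∈ Finset.range T, ‖u i‖, fun n => ?_⟩
  rw [← hu.map_mod_nat n]
  exact Finset.single_le_sum (f := fun i => ‖u i‖) (fun _ _ => norm_nonneg _)
    (Finset.mem_range.2 (Nat.mod_lt _ hT))

lemma periodic_sum_range {M : Type*} [AddCommMonoid M] {u : ℕ → M} {T : ℕ}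
    (hu : Function.Periodic u T) (hsum : ∑ k ∈ Finset.range T, u k = 0) :
    Function.Periodic (fun n => ∑ k ∈ Finset.range n, u k) T := by
  intro n
  simp only [add_comm n T, Finset.sum_range_add, hsum, zero_add]
  exact Finset.sum_congr rfl fun k _ => by rw [add_comm, hu]

variable [NormedSpace ℝ E] [CompleteSpace E]

lemma tsum_smul_sub_by_parts {f : ℕ → ℝ} (hf : Summable f) {u : ℕ → E} {K : ℝ}
    (hu : ∀ n, ‖u n‖ ≤ K) :
    ∑' n, f n • (u (n + 1) - u n) = ∑' n, (f n - f (n + 1)) • u (n + 1) - f 0 • u 0 := by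
  have hbound (v : ℕ → E) (hv : ∀ n, ‖v n‖ ≤ K) : Summable fun n => f n • v n :=
    Summable.of_norm_bounded (hf.norm.mul_right K) fun n => by
      rw [norm_smul]
      exact mul_le_mul_of_nonneg_left (hv n) (norm_nonneg _)
  have hs := hbound u hu
  have hs' := hbound (fun n => u (n + 1)) fun n => hu (n + 1)
  simp only [smul_sub, sub_smul]
  rw [hs'.tsum_sub hs, hs'.tsum_sub ((summable_nat_add_iff 1).2 hs), hs.tsum_eq_zero_add]
  abel

-- Two summations by parts. The second one is available because subtracting the mean `μ` of the
-- partial sums of `c` makes the sums of the partial sums periodic, hence bounded.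
lemma exists_tsum_smul_eq_of_periodic {c : ℕ → E} {T : ℕ} (hT : 0 < T)
    (hc : Function.Periodic c T) (hsum : ∑ k ∈ Finset.range T, c k = 0) {μ : E}
    (hμ : ∑ k ∈ Finset.range T, ∑ i ∈ Finset.range (k + 1), c i = T • μ) :
    ∃ (B : ℕ → E) (K : ℝ), (∀ n, ‖B n‖ ≤ K) ∧ ∀ f : ℕ → ℝ, Summable f →
      ∑' n, f n • c n = f 0 • μ + ∑' n, (f n - 2 * f (n + 1) + f (n + 2)) • B n := by
  set A : ℕ → E := fun n => ∑ i ∈ Finset.range n, c i - μ with hA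
  have hAper : Function.Periodic A T := fun n =>
    congrArg (· - μ) (periodic_sum_range hc hsum n)
  set B : ℕ → E := fun n => ∑ k ∈ Finset.range n, A (k + 1) with hB
  have hBper : Function.Periodic B T := by
    refine periodic_sum_range (fun n => ?_) ?_
    · rw [add_right_comm, hAper]
    · rw [Finset.sum_sub_distrib, hμ, Finset.sum_const, Finset.card_range, sub_self]
  obtain ⟨KA, hKA⟩ := exists_norm_le_of_periodic hT hAper
  obtain ⟨KB, hKB⟩ := exists_norm_le_of_periodic hT hBper
  refine ⟨fun n => B (n + 1), KB, fun n => hKB _, fun f hf => ?_⟩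
  have hcA (n : ℕ) : c n = A (n + 1) - A n := by
    simp only [hA, Finset.sum_range_succ]
    abel
  have hAB (n : ℕ) : A (n + 1) = B (n + 1) - B n := by
    simp only [hB, Finset.sum_range_succ, add_sub_cancel_left]
  have hdiff (n : ℕ) : f n - f (n + 1) - (f (n + 1) - f (n + 2))
      = f n - 2 * f (n + 1) + f (n + 2) := by ring
  simp only [hcA]
  rw [tsum_smul_sub_by_parts hf hKA]
  simp only [hAB]
  rw [tsum_smul_sub_by_parts (hf.sub ((summable_nat_add_iff 1).2 hf)) hKB]
  simp only [hdiff]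
  simp only [hA, hB, Finset.sum_range_zero, smul_zero, sub_zero, zero_sub, smul_neg, sub_neg_eq_add]
  exact add_comm _ _

lemma tendsto_tsum_smul_of_periodic {c : ℕ → E} {T : ℕ} (hT : 0 < T)
    (hc : Function.Periodic c T) (hsum : ∑ k ∈ Finset.range T, c k = 0) {μ : E}
    (hμ : ∑ k ∈ Finset.range T, ∑ i ∈ Finset.range (k + 1), c i = T • μ)
    {ι : Type*} {l : Filter ι} {f : ι → ℕ → ℝ} (hf : ∀ᶠ i in l, Summable (f i))
    (hf1 : ∀ n, Filter.Tendsto (f · n) l (nhds 1)) {g : ℕ → ℝ} (hg : Summable g)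
    (hfg : ∀ᶠ i in l, ∀ n, |f i n - 2 * f i (n + 1) + f i (n + 2)| ≤ g n) :
    Filter.Tendsto (fun i => ∑' n, f i n • c n) l (nhds μ) := by
  obtain ⟨B, K, hK, hB⟩ := exists_tsum_smul_eq_of_periodic hT hc hsum hμ
  have hdiff (n : ℕ) : Filter.Tendsto
      (fun i => (f i n - 2 * f i (n + 1) + f i (n + 2)) • B n) l (nhds 0) := by
    have h := ((hf1 n).sub ((hf1 (n + 1)).const_mul 2)).add (hf1 (n + 2))
    norm_num at h
    simpa using h.smul_const (B n)
  have herror : Filter.Tendsto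
      (fun i => ∑' n, (f i n - 2 * f i (n + 1) + f i (n + 2)) • B n) l (nhds 0) := by
    rw [← tsum_zero (α := E) (β := ℕ)]
    refine tendsto_tsum_of_dominated_convergence (hg.mul_right K) hdiff ?_
    filter_upwards [hfg] with i hi n
    rw [norm_smul]
    exact mul_le_mul (hi n) (hK n) (norm_nonneg _) ((abs_nonneg _).trans (hi n))
  have hlim := ((hf1 0).smul_const μ).add herror
  rw [one_smul, add_zero] at hlim
  refine hlim.congr' ?_
  filter_upwards [hf] with i hi
  exact (hB _ hi).symm

end AbelianLimit

section Gaussian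

lemma summable_exp_neg_mul_sq {s : ℝ} (hs : 0 < s) :
    Summable fun n : ℕ => Real.exp (-(s * (n : ℝ) ^ 2)) := by
  refine (Real.summable_exp_nat_mul_of_ge (neg_lt_zero.2 hs) (f := fun n => (n : ℝ) ^ 2)
    fun n => ?_).congr fun n => by rw [neg_mul]
  exact_mod_cast Nat.le_self_pow two_ne_zero n

lemma abs_second_difference_le {w x v u s : ℝ} (hw : 0 ≤ w) (hx : 1 - u ≤ x) (hx0 : 0 ≤ x)
    (hx1 : x ≤ 1) (hv : 1 - s ≤ v) (hv1 : v ≤ 1) :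
    |w - 2 * (w * x) + w * x ^ 2 * v| ≤ w * (u ^ 2 + s) := by
  have hfactor : w - 2 * (w * x) + w * x ^ 2 * v = w * ((1 - x) ^ 2 - x ^ 2 * (1 - v)) := by ring
  have hsq : (1 - x) ^ 2 ≤ u ^ 2 := pow_le_pow_left₀ (by linarith) (by linarith) 2
  have hxv : x ^ 2 * (1 - v) ≤ s := by nlinarith [pow_le_one₀ (n := 2) hx0 hx1]
  have hxv0 : 0 ≤ x ^ 2 * (1 - v) := mul_nonneg (sq_nonneg x) (by linarith)
  rw [hfactor, abs_mul, abs_of_nonneg hw]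
  refine mul_le_mul_of_nonneg_left ?_ hw
  rw [abs_le]
  constructor <;> nlinarith [sq_nonneg (1 - x)]

lemma exp_neg_mul_quadratic_le {y : ℝ} (hy : 0 ≤ y) :
    Real.exp (-y) * ((y + 1) * (8 * y + 4)) ≤ 32 := by
  have hhalf : (1 + y / 2) ^ 2 ≤ Real.exp y := by
    calc (1 + y / 2) ^ 2 ≤ Real.exp (y / 2) ^ 2 :=
          pow_le_pow_left₀ (by positivity) (by linarith [Real.add_one_le_exp (y / 2)]) 2
      _ = Real.exp y := by rw [← Real.exp_nat_mul]; congr 1; push_cast; ring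
  rw [Real.exp_neg, inv_mul_le_iff₀ (Real.exp_pos y)]
  nlinarith

-- The constant comes from `(n + 1)^2 s ≤ 2 (y + 1)` and `|Δ²| ≤ e^{-y} s (8 y + 4)`, `y = s n²`.
lemma abs_second_difference_exp_neg_mul_sq_le {s : ℝ} (hs : 0 < s) (hs1 : s ≤ 1) (n : ℕ) :
    |Real.exp (-(s * (n : ℝ) ^ 2)) - 2 * Real.exp (-(s * ((n + 1 : ℕ) : ℝ) ^ 2)) +
      Real.exp (-(s * ((n + 2 : ℕ) : ℝ) ^ 2))| ≤ 64 * (1 / ((n + 1 : ℕ) : ℝ) ^ 2) := by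
  set y := s * (n : ℝ) ^ 2
  set u := s * (2 * n + 1)
  have hy0 : 0 ≤ y := by positivity
  have hu0 : 0 ≤ u := by positivity
  have hexp1 : Real.exp (-(s * ((n + 1 : ℕ) : ℝ) ^ 2)) = Real.exp (-y) * Real.exp (-u) := by
    rw [← Real.exp_add]
    congr 1
    push_cast
    ring
  have hexp2 : Real.exp (-(s * ((n + 2 : ℕ) : ℝ) ^ 2))
      = Real.exp (-y) * Real.exp (-u) ^ 2 * Real.exp (-(2 * s)) := by
    rw [← Real.exp_nat_mul, ← Real.exp_add, ← Real.exp_add]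
    congr 1
    push_cast
    ring
  have husq : u ^ 2 + 2 * s ≤ s * (8 * y + 4) := by
    nlinarith [mul_nonneg (sq_nonneg s) (sq_nonneg (2 * (n : ℝ) - 1)),
      mul_le_mul_of_nonneg_left hs1 hs.le]
  have hscale : ((n + 1 : ℕ) : ℝ) ^ 2 * s ≤ 2 * (y + 1) := by
    push_cast
    nlinarith [mul_nonneg hs.le (sq_nonneg ((n : ℝ) - 1))]
  rw [hexp1, hexp2, mul_one_div, le_div_iff₀ (by positivity)]
  have hdiff := abs_second_difference_le (Real.exp_nonneg (-y)) (Real.one_sub_le_exp_neg u)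
    (Real.exp_nonneg _) (Real.exp_le_one_iff.2 (neg_nonpos.2 hu0))
    (Real.one_sub_le_exp_neg (2 * s)) (Real.exp_le_one_iff.2 (by linarith))
  calc _ ≤ Real.exp (-y) * (s * (8 * y + 4)) * ((n + 1 : ℕ) : ℝ) ^ 2 := by
        gcongr
        exact hdiff.trans (by gcongr)
    _ = Real.exp (-y) * ((8 * y + 4) * (((n + 1 : ℕ) : ℝ) ^ 2 * s)) := by ring
    _ ≤ Real.exp (-y) * ((8 * y + 4) * (2 * (y + 1))) := by gcongr
    _ = 2 * (Real.exp (-y) * ((y + 1) * (8 * y + 4))) := by ring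
    _ ≤ 64 := by linarith [exp_neg_mul_quadratic_le hy0]

end Gaussian

section OddPeriodic

lemma sum_range_two_mul_add_one {M : Type*} [AddCommMonoid M] (g : ℕ → M) (H : ℕ) :
    ∑ i ∈ Finset.range (2 * H + 1), g i + g H
      = ∑ i ∈ Finset.range (H + 1), (g i + g (2 * H - i)) := by
  have hreflect : ∑ i ∈ Finset.range (H + 1), g (H + i)
      = ∑ i ∈ Finset.range (H + 1), g (2 * H - i) := by
    rw [← Finset.sum_range_reflect]
    refine Finset.sum_congr rfl fun i hi => congrArg g ?_
    have := Finset.mem_range.1 hi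
    omega
  rw [show 2 * H + 1 = H + (H + 1) by ring, Finset.sum_range_add, hreflect, add_right_comm,
    ← Finset.sum_range_succ, Finset.sum_add_distrib]

lemma sum_range_sum_range_succ {M : Type*} [AddCommMonoid M] (g : ℕ → M) (L : ℕ) :
    ∑ k ∈ Finset.range L, ∑ i ∈ Finset.range (k + 1), g i
      = ∑ i ∈ Finset.range L, (L - i) • g i := by
  induction L with
  | zero => simp
  | succ L ih =>
    have hstep : ∀ i ∈ Finset.range L, (L + 1 - i) • g i = (L - i) • g i + g i := fun i hi => by
      rw [Nat.succ_sub (Finset.mem_range.1 hi).le, succ_nsmul]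
    rw [Finset.sum_range_succ, ih, Finset.sum_range_succ _ L, Finset.sum_range_succ _ L,
      Nat.add_sub_cancel_left, one_smul, Finset.sum_congr rfl hstep, Finset.sum_add_distrib,
      add_assoc]

variable {G : Type*} [AddCommGroup G] {c : ℤ → G} {H : ℕ}

lemma apply_two_mul_sub (hodd : Function.Odd c) (hper : Function.Periodic c (2 * H)) (n : ℤ) :
    c (2 * H - n) = -c n := by
  rw [sub_eq_neg_add, hper, hodd]

variable [IsAddTorsionFree G]

lemma apply_half_period (hodd : Function.Odd c) (hper : Function.Periodic c (2 * H)) :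
    c H = 0 := by
  have h := apply_two_mul_sub hodd hper H
  rwa [show (2 * H - H : ℤ) = H by ring, self_eq_neg] at h

lemma sum_range_two_mul_eq_zero (hodd : Function.Odd c) (hper : Function.Periodic c (2 * H)) :
    ∑ k ∈ Finset.range (2 * H), c k = 0 := by
  have h := sum_range_two_mul_add_one (fun n : ℕ => c n) H
  have hcancel : ∀ i ∈ Finset.range (H + 1), c (i : ℕ) + c ((2 * H - i : ℕ) : ℤ) = 0 := by
    intro i hi
    have := Finset.mem_range.1 hi
    rw [Nat.cast_sub (by omega), Nat.cast_mul, Nat.cast_two, apply_two_mul_sub hodd hper,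
      add_neg_cancel]
  rw [Finset.sum_eq_zero hcancel, apply_half_period hodd hper, add_zero, Finset.sum_range_succ,
    Nat.cast_mul, Nat.cast_two, hper.eq, hodd.map_zero, add_zero] at h
  exact h

end OddPeriodic

section OddPeriodicLimit

variable {E : Type*} [NormedAddCommGroup E] [NormedSpace ℝ E] {c : ℤ → E} {H : ℕ}

lemma sum_sum_range_two_mul (hH : 0 < H) (hodd : Function.Odd c)
    (hper : Function.Periodic c (2 * H)) :
    ∑ k ∈ Finset.range (2 * H), ∑ i ∈ Finset.range (k + 1), c i
      = (2 * H) • ∑ n ∈ Finset.range (H + 1), (1 - n / H : ℝ) • c n := by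
  have : IsAddTorsionFree E := .of_isTorsionFree ℝ E
  have h := sum_range_two_mul_add_one (fun n : ℕ => (2 * H - n) • c n) H
  have hpair : ∀ n ∈ Finset.range (H + 1),
      (2 * H - n) • c n + (2 * H - (2 * H - n)) • c ((2 * H - n : ℕ) : ℤ)
        = (2 * H) • (1 - n / H : ℝ) • c n := by
    intro n hn
    have hnH : n ≤ 2 * H := by have := Finset.mem_range.1 hn; omega
    have hH0 : (H : ℝ) ≠ 0 := Nat.cast_ne_zero.2 hH.ne'
    rw [Nat.sub_sub_self hnH, Nat.cast_sub hnH, Nat.cast_mul, Nat.cast_two,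
      apply_two_mul_sub hodd hper, smul_neg, ← sub_eq_add_neg, ← Nat.cast_smul_eq_nsmul ℝ,
      ← Nat.cast_smul_eq_nsmul ℝ n, ← Nat.cast_smul_eq_nsmul ℝ (2 * H), ← sub_smul, smul_smul,
      Nat.cast_sub hnH]
    congr 1
    push_cast
    field_simp
    ring
  rw [Finset.sum_congr rfl hpair, apply_half_period hodd hper, smul_zero, add_zero,
    Finset.sum_range_succ, Nat.sub_self, zero_smul, add_zero, ← Finset.smul_sum] at h
  rw [← h, sum_range_sum_range_succ]

lemma tendsto_tsum_exp_neg_mul_sq_smul [CompleteSpace E] (hH : 0 < H) (hodd : Function.Odd c)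
    (hper : Function.Periodic c (2 * H)) :
    Filter.Tendsto (fun s : ℝ => ∑' n : ℕ, Real.exp (-(s * (n : ℝ) ^ 2)) • c n)
      (nhdsWithin 0 (Set.Ioi 0)) (nhds (∑ n ∈ Finset.range (H + 1), (1 - n / H : ℝ) • c n)) := by
  have : IsAddTorsionFree E := .of_isTorsionFree ℝ E
  refine tendsto_tsum_smul_of_periodic (T := 2 * H) (g := fun n => 64 * (1 / ((n + 1 : ℕ) : ℝ) ^ 2))
    (Nat.mul_pos two_pos hH) (fun n => ?_) (sum_range_two_mul_eq_zero hodd hper)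
    (sum_sum_range_two_mul hH hodd hper) ?_ (fun n => ?_) ?_ ?_
  · push_cast
    exact hper n
  · filter_upwards [self_mem_nhdsWithin] with s hs
    exact summable_exp_neg_mul_sq hs
  · have hcont : Continuous fun s : ℝ => Real.exp (-(s * (n : ℝ) ^ 2)) := by fun_prop
    simpa using (hcont.tendsto 0).mono_left (nhdsWithin_le_nhds (s := Set.Ioi 0))
  · exact ((summable_nat_add_iff 1).2 (Real.summable_one_div_nat_pow.2 one_lt_two)).mul_left 64
  · filter_upwards [Ioo_mem_nhdsGT (one_pos (α := ℝ))] with s hs n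
    exact abs_second_difference_exp_neg_mul_sq_le hs.1 hs.2.le n

end OddPeriodicLimit

section PartialTheta

lemma chiS_eq_ite_dvd (m a : ℕ) (n : ℤ) : chiS m a n =
    if (2 * m : ℤ) ∣ n - (m - a - 1) then 1
    else if (2 * m : ℤ) ∣ n - (m + a + 1) then -1 else 0 := by
  unfold chiS
  simp only [Int.emod_eq_emod_iff_emod_sub_eq_zero, ← Int.dvd_iff_emod_eq_zero]

lemma chiS_periodic (m a : ℕ) : Function.Periodic (chiS m a) (2 * m) := fun n => by
  unfold chiS
  rw [Int.add_emod_right]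

lemma chiS_odd {m a : ℕ} (ha : a + 2 ≤ m) : Function.Odd (chiS m a) := fun n => by
  have hneg (b : ℤ) : (2 * m : ℤ) ∣ -n - b ↔ (2 * m : ℤ) ∣ n - (2 * m - b) := by
    rw [← dvd_neg, ← dvd_sub_self_right]
    ring_nf
  have hdisjoint : (2 * m : ℤ) ∣ n - (m - a - 1) → ¬ (2 * m : ℤ) ∣ n - (m + a + 1) := by
    intro hplus hminus
    have hdvd := dvd_sub hplus hminus
    rw [show (n - (m - a - 1) - (n - (m + a + 1)) : ℤ) = 2 * (a + 1) by ring] at hdvd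
    have := Int.le_of_dvd (by omega) hdvd
    omega
  have hplus : (2 * m - (m - a - 1) : ℤ) = m + a + 1 := by ring
  have hminus : (2 * m - (m + a + 1) : ℤ) = m - a - 1 := by ring
  simp only [chiS_eq_ite_dvd, hneg, hplus, hminus]
  split_ifs <;> simp_all only [not_true_eq_false, imp_false, neg_neg, neg_zero]

lemma cexp_int_mul_sq_periodic {H : ℕ} (hH : H ≠ 0) (M : ℤ) :
    Function.Periodic
      (fun n : ℤ => Complex.exp (2 * Real.pi * Complex.I * M * (n : ℂ) ^ 2 / (4 * H)))
      (2 * H) := fun n => by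
  have hH0 : (H : ℂ) ≠ 0 := Nat.cast_ne_zero.2 hH
  have hexponent : 2 * Real.pi * Complex.I * M * ((n + 2 * H : ℤ) : ℂ) ^ 2 / (4 * H)
      = 2 * Real.pi * Complex.I * M * (n : ℂ) ^ 2 / (4 * H)
        + ((M * (n + H) : ℤ) : ℂ) * (2 * Real.pi * Complex.I) := by
    push_cast
    field_simp
    ring
  simp only [hexponent, Complex.exp_add, Complex.exp_int_mul_two_pi_mul_I, mul_one]

/-- The coefficient `χ_{2m}^{(a)}(n) e^{2πiMn²/(4mN)}` with which the Gaussian weight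
`e^{-tn²/(4m)}` enters the partial theta series at `q = e^{2πiM/N - t}`. -/
noncomputable def thetaCoeff (m a : ℕ) (M : ℤ) (N : ℕ) (n : ℤ) : ℂ :=
  chiS m a n * Complex.exp (2 * Real.pi * Complex.I * M * (n : ℂ) ^ 2 / (4 * (m * N : ℕ)))

lemma thetaCoeff_odd {m a : ℕ} (ha : a + 2 ≤ m) (M : ℤ) (N : ℕ) :
    Function.Odd (thetaCoeff m a M N) := fun n => by
  simp only [thetaCoeff, chiS_odd ha n, Int.cast_neg, neg_sq, neg_mul]

lemma thetaCoeff_periodic {m N : ℕ} (hmN : m * N ≠ 0) (a : ℕ) (M : ℤ) :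
    Function.Periodic (thetaCoeff m a M N) (2 * (m * N : ℕ)) := fun n => by
  have hchi : chiS m a (n + 2 * (m * N : ℕ)) = chiS m a n := by
    rw [show (2 * (m * N : ℕ) : ℤ) = N * (2 * m) by push_cast; ring]
    exact (chiS_periodic m a).nat_mul N n
  exact congrArg₂ (fun (k : ℤ) (w : ℂ) => k * w) hchi (cexp_int_mul_sq_periodic hmN M n)

lemma hasSum_ite_mod_eq {α : Type*} [AddCommMonoid α] [TopologicalSpace α] {G : ℕ → α}
    {K ρ : ℕ} (hρ : ρ < K) {s : α} (hG : HasSum (fun r => G (K * r + ρ)) s) :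
    HasSum (fun n => if n % K = ρ then G n else 0) s := by
  have hinj : Function.Injective fun r : ℕ => K * r + ρ := fun x y hxy =>
    Nat.eq_of_mul_eq_mul_left (Nat.zero_lt_of_lt hρ) (Nat.add_right_cancel hxy)
  rw [← hinj.hasSum_iff]
  · simpa only [Function.comp_def, Nat.mul_add_mod, Nat.mod_eq_of_lt hρ, if_true] using hG
  · rintro n hn
    exact if_neg fun h => hn ⟨n / K, by simp only [← h, Nat.div_add_mod]⟩

lemma chiS_natCast (a d n : ℕ) : chiS (a + d + 2) a n =
    (if n % (2 * (a + d + 2)) = d + 1 then 1 else 0) -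
      (if n % (2 * (a + d + 2)) = 2 * a + d + 3 then 1 else 0) := by
  have hplus : ((a + d + 2 : ℕ) - a - 1 : ℤ) % (2 * (a + d + 2 : ℕ)) = (d + 1 : ℕ) := by
    rw [Int.emod_eq_of_lt] <;> omega
  have hminus : ((a + d + 2 : ℕ) + a + 1 : ℤ) % (2 * (a + d + 2 : ℕ)) = (2 * a + d + 3 : ℕ) := by
    rw [Int.emod_eq_of_lt] <;> omega
  unfold chiS
  rw [hplus, hminus, ← Nat.cast_two, ← Nat.cast_mul, ← Int.natCast_mod]
  simp only [Nat.cast_inj]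
  split_ifs <;> omega

lemma tsum_chiS_mul (a d : ℕ) {G : ℕ → ℂ} (hG : Summable G) :
    ∑' n : ℕ, (chiS (a + d + 2) a n : ℂ) * G n
      = ∑' r, (G (2 * (a + d + 2) * r + (d + 1)) - G (2 * (a + d + 2) * r + (2 * a + d + 3))) := by
  have hsum (ρ : ℕ) : Summable fun r => G (2 * (a + d + 2) * r + ρ) :=
    hG.comp_injective fun x y hxy =>
      Nat.eq_of_mul_eq_mul_left (by omega) (Nat.add_right_cancel hxy)
  have hplus := hasSum_ite_mod_eq (by omega) (hsum (d + 1)).hasSum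
  have hminus := hasSum_ite_mod_eq (by omega) (hsum (2 * a + d + 3)).hasSum
  rw [(hsum _).tsum_sub (hsum _), ← (hplus.sub hminus).tsum_eq]
  refine tsum_congr fun n => ?_
  rw [chiS_natCast]
  push_cast
  rw [sub_mul, ite_mul, ite_mul, one_mul, zero_mul]

lemma summable_cexp_mul_sq {z : ℂ} (hz : z.re < 0) :
    Summable fun n : ℕ => Complex.exp (z * (n : ℂ) ^ 2) := by
  refine Summable.of_norm_bounded (summable_exp_neg_mul_sq (neg_pos.2 hz)) fun n => ?_
  have hre : (z * (n : ℂ) ^ 2).re = z.re * (n : ℝ) ^ 2 := by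
    exact_mod_cast Complex.re_mul_ofReal z ((n : ℝ) ^ 2)
  rw [Complex.norm_exp, hre, neg_mul, neg_neg]

lemma exp_mul_S_eq_tsum_chiS {m a : ℕ} (ha : a + 2 ≤ m) {z : ℂ} (hz : z.re < 0) :
    Complex.exp (z * (((m : ℂ) - a - 1) ^ 2 / (4 * m))) * S m a (Complex.exp z)
      = ∑' n : ℕ, (chiS m a n : ℂ) * Complex.exp (z / (4 * m) * (n : ℂ) ^ 2) := by
  obtain ⟨d, rfl⟩ : ∃ d, m = a + d + 2 := ⟨m - 2 - a, by omega⟩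
  have hq : ‖Complex.exp z‖ < 1 := by
    rwa [Complex.norm_exp, Real.exp_lt_one_iff]
  have hm0 : ((a + d + 2 : ℕ) : ℂ) ≠ 0 := Nat.cast_ne_zero.2 (by omega)
  have hre : (z / (4 * (a + d + 2 : ℕ))).re < 0 := by
    rw [← Nat.cast_ofNat (n := 4), ← Nat.cast_mul, Complex.div_natCast_re]
    exact div_neg_of_neg_of_pos hz (by positivity)
  rw [S_eq_tsum hq, tsum_chiS_mul a d (summable_cexp_mul_sq hre), ← tsum_mul_left]
  refine tsum_congr fun r => ?_
  rw [mul_sub, mul_one, mul_sub, ← pow_add, ← Complex.exp_nat_mul, ← Complex.exp_nat_mul,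
    ← Complex.exp_add, ← Complex.exp_add]
  push_cast at hm0 ⊢
  congr 2 <;> field_simp <;> ring

lemma exp_mul_S_eq_tsum_thetaCoeff {m a : ℕ} (ha : a + 2 ≤ m) (M : ℤ) {N : ℕ} (hN : 0 < N)
    {t : ℝ} (ht : 0 < t) :
    Complex.exp ((2 * Real.pi * Complex.I * M / N - t) * (((m : ℂ) - a - 1) ^ 2 / (4 * m))) *
        S m a (Complex.exp (2 * Real.pi * Complex.I * M / N - t))
      = ∑' n : ℕ, Real.exp (-(t / (4 * m) * (n : ℝ) ^ 2)) • thetaCoeff m a M N n := by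
  have hre : (2 * Real.pi * Complex.I * M / N - t : ℂ).re = -t := by simp
  have hm0 : (m : ℂ) ≠ 0 := Nat.cast_ne_zero.2 (by omega)
  have hN0 : (N : ℂ) ≠ 0 := Nat.cast_ne_zero.2 hN.ne'
  rw [exp_mul_S_eq_tsum_chiS ha (hre.trans_lt (neg_lt_zero.2 ht))]
  refine tsum_congr fun n => ?_
  rw [thetaCoeff, Complex.real_smul, Complex.ofReal_exp, mul_left_comm, ← Complex.exp_add]
  congr 2
  push_cast
  field_simp
  ring

end PartialTheta

lemma tendsto_div_nhdsGT_zero {c : ℝ} (hc : 0 < c) :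
    Filter.Tendsto (fun t : ℝ => t / c) (nhdsWithin 0 (Set.Ioi 0)) (nhdsWithin 0 (Set.Ioi 0)) := by
  refine tendsto_nhdsWithin_iff.2 ⟨?_, ?_⟩
  · simpa using ((continuous_id.div_const c).tendsto 0).mono_left nhdsWithin_le_nhds
  · filter_upwards [self_mem_nhdsWithin] with t ht using div_pos ht hc

theorem stmt1_general (m a : ℕ) (hm : 2 ≤ m) (ha : a ≤ m - 2) (M : ℤ) (N : ℕ) (hN : 0 < N) :
    Filter.Tendsto
      (fun t : ℝ => (m : ℂ) *
        Complex.exp ((2 * Real.pi * Complex.I * M / N - t) * (((m : ℂ) - a - 1) ^ 2 / (4 * m))) *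
        S m a (Complex.exp (2 * Real.pi * Complex.I * M / N - t)))
      (nhdsWithin 0 (Set.Ioi 0))
      (nhds ((m : ℂ) * ∑ n ∈ Finset.range (m * N + 1),
        (chiS m a n : ℂ) * (1 - (n : ℂ) / (m * N)) *
          Complex.exp (2 * Real.pi * Complex.I * M * (n : ℂ) ^ 2 / (4 * m * N)))) := by
  have hma : a + 2 ≤ m := by omega
  have hm0 : 0 < m := by omega
  have hmN : 0 < m * N := Nat.mul_pos hm0 hN
  have hscale := tendsto_div_nhdsGT_zero (c := 4 * m) (by positivity)
  have hlim := (tendsto_tsum_exp_neg_mul_sq_smul hmN (thetaCoeff_odd hma M N)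
    (thetaCoeff_periodic hmN.ne' a M)).comp hscale
  convert (hlim.const_mul (m : ℂ)).congr' ?_ using 3
  · refine Finset.sum_congr rfl fun n _ => ?_
    rw [thetaCoeff, Complex.real_smul]
    push_cast
    ring_nf
  · filter_upwards [self_mem_nhdsWithin] with t ht
    rw [mul_assoc, exp_mul_S_eq_tsum_thetaCoeff hma M hN ht, Function.comp_apply]

theorem stmt1 (m a : ℕ) (hm : 2 ≤ m) (ha : a ≤ m - 2) (M : ℤ) (N : ℕ) (hN : 0 < N)
    (hMN : IsCoprime M (N : ℤ)) :
    Filter.Tendsto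
      (fun t : ℝ => (m : ℂ) *
        Complex.exp ((2 * Real.pi * Complex.I * M / N - t) * (((m : ℂ) - a - 1) ^ 2 / (4 * m))) *
        S m a (Complex.exp (2 * Real.pi * Complex.I * M / N - t)))
      (nhdsWithin 0 (Set.Ioi 0))
      (nhds ((m : ℂ) * ∑ n ∈ Finset.range (m * N + 1),
        (chiS m a n : ℂ) * (1 - (n : ℂ) / (m * N)) *
          Complex.exp (2 * Real.pi * Complex.I * M * (n : ℂ) ^ 2 / (4 * m * N)))) :=
  stmt1_general m a hm ha M N hN
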